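/- arXiv:1911.05662 — 3 statements merged into one kernel-verified Lean document; each statement's English description precedes it below -/
import Mathlib

section
/- Let R > 0, S > 0, and let u₁, k₁, z₁, u₂, k₂, z₂ be positive real numbers satisfying u₁k₁/R + u₂k₂/R + z₁k₁ + z₂k₂ + u₁z₁ + u₂z₂ ≤ S. Then u₁k₁z₁ + u₂k₂z₂ ≤ S·√(R·S)/(3·√3). -/
theorem amgm3 (a b c : ℝ) (ha : 0 < a) (hb : 0 < b) (hc : 0 < c) :
    27 * (a * b * c) ≤ (a + b + c) ^ 3 := by
  nlinarith [mul_nonneg ha.le (sq_nonneg (b - c)), mul_nonneg hb.le (sq_nonneg (a - c)),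
    mul_nonneg hc.le (sq_nonneg (a - b)), mul_nonneg ha.le (sq_nonneg (a - c)),
    mul_nonneg ha.le (sq_nonneg (a - b)), mul_nonneg hb.le (sq_nonneg (b - c)),
    mul_nonneg hb.le (sq_nonneg (a - b)), mul_nonneg hc.le (sq_nonneg (a - c)),
    mul_nonneg hc.le (sq_nonneg (b - c))]

theorem one_block (R S u k z : ℝ) (hR : 0 < R) (hS : 0 < S)
    (hu : 0 < u) (hk : 0 < k) (hz : 0 < z)
    (h : u * k / R + z * k + u * z ≤ S) :
    u * k * z * (3 * Real.sqrt 3) ≤ (u * k / R + z * k + u * z) * Real.sqrt (R * S) := by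
  have h1 := amgm3 (u * k / R) (z * k) (u * z) (by positivity) (by positivity) (by positivity)
  have hs : 0 < u * k / R + z * k + u * z := by positivity
  have e : R * (u * k / R * (z * k) * (u * z)) = (u * k * z) ^ 2 := by
    field_simp
  generalize u * k / R + z * k + u * z = s at *
  refine (pow_le_pow_iff_left₀ (by positivity) (by positivity) two_ne_zero).mp ?_
  rw [mul_pow (u * k * z), mul_pow 3, mul_pow s, Real.sq_sqrt (by norm_num), Real.sq_sqrt (by positivity), ← e]
  have h2 := mul_le_mul_of_nonneg_left h1 hR.le
  have h3 : R * s ^ 2 * s ≤ R * s ^ 2 * S := mul_le_mul_of_nonneg_left h (by positivity)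
  linarith

/-- Non-overlap case of Lemma 2: under the memory-capacity constraint,
`u₁k₁z₁ + u₂k₂z₂ ≤ S√(RS)/(3√3)`. -/
theorem two_block_term_bound (R S u₁ k₁ z₁ u₂ k₂ z₂ : ℝ)
    (hR : 0 < R) (hS : 0 < S)
    (hu₁ : 0 < u₁) (hk₁ : 0 < k₁) (hz₁ : 0 < z₁)
    (hu₂ : 0 < u₂) (hk₂ : 0 < k₂) (hz₂ : 0 < z₂)
    (hmem : u₁ * k₁ / R + u₂ * k₂ / R + z₁ * k₁ + z₂ * k₂ + u₁ * z₁ + u₂ * z₂ ≤ S) :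
    u₁ * k₁ * z₁ + u₂ * k₂ * z₂ ≤ S * Real.sqrt (R * S) / (3 * Real.sqrt 3) := by
  rw [le_div_iff₀ (by positivity)]
  have p1 : 0 < u₁ * k₁ / R + z₁ * k₁ + u₁ * z₁ := by positivity
  have p2 : 0 < u₂ * k₂ / R + z₂ * k₂ + u₂ * z₂ := by positivity
  have h1 := one_block R S u₁ k₁ z₁ hR hS hu₁ hk₁ hz₁ (by linarith)
  have h2 := one_block R S u₂ k₂ z₂ hR hS hu₂ hk₂ hz₂ (by linarith)
  have h3 := mul_le_mul_of_nonneg_right hmem (Real.sqrt_nonneg (R * S))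
  linarith
end

section
/- Let R > 0 and S > 0 be real numbers. Then S·√(R·S)/(3·√3) is the greatest value of the product u·k·z over all positive reals u, k, z satisfying uk/R + zk + uz ≤ S; the maximum is attained at u = k = √(S·R/3) and z = √(S/(3·R)). -/
/-- Single-block optimum in Lemma 2: `S√(RS)/(3√3)` is the greatest value of `u*k*z`
over positive reals with `uk/R + zk + uz ≤ S`, attained at `u = k = √(SR/3)` and
`z = √(S/(3R))`. -/
theorem single_block_max (R S : ℝ) (hR : 0 < R) (hS : 0 < S) :
    IsGreatest {y : ℝ | ∃ u k z : ℝ, 0 < u ∧ 0 < k ∧ 0 < z ∧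
        u * k / R + z * k + u * z ≤ S ∧ y = u * k * z}
      (S * Real.sqrt (R * S) / (3 * Real.sqrt 3)) ∧
    Real.sqrt (S * R / 3) * Real.sqrt (S * R / 3) * Real.sqrt (S / (3 * R)) =
      S * Real.sqrt (R * S) / (3 * Real.sqrt 3) := by
  obtain ⟨a, ha⟩ : ∃ a, a = Real.sqrt (S * R / 3) := ⟨_, rfl⟩
  have ha0 : 0 < a := by rw [ha]; positivity
  have ha2 : a * a = S * R / 3 := by rw [ha]; exact Real.mul_self_sqrt (by positivity)
  have hz : Real.sqrt (S / (3 * R)) = a / R := by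
    rw [Real.sqrt_eq_iff_mul_self_eq (by positivity) (by positivity), div_mul_div_comm, ha2]
    field_simp
  have hRS : Real.sqrt (R * S) = Real.sqrt 3 * a := by
    rw [ha, ← Real.sqrt_mul (by norm_num)]
    congr 1
    ring
  have h3 : 0 < Real.sqrt 3 := by positivity
  have hv : S * Real.sqrt (R * S) / (3 * Real.sqrt 3) = S * a / 3 := by
    rw [hRS]
    field_simp
  have hmax : a * a * (a / R) = S * a / 3 := by
    rw [ha2]
    field_simp
  rw [hv, hz, ← ha]
  refine ⟨⟨⟨a, a, a / R, ha0, ha0, by positivity, ?_, hmax.symm⟩, ?_⟩, hmax⟩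
  · have h1 : a * a / R = S / 3 := by rw [ha2]; field_simp
    have h2 : a / R * a = S / 3 := by rw [← h1]; ring
    have h4 : a * (a / R) = S / 3 := by rw [← h1]; ring
    rw [h1, h2, h4]
    linarith
  · rintro y ⟨u, k, z, hu, hk, hz0, hc, rfl⟩
    have amgm : ∀ x y w : ℝ, 0 < x → 0 < y → 0 < w → 27 * (x * y * w) ≤ (x + y + w) ^ 3 := by
      intro x y w hx hy hw
      nlinarith [mul_nonneg hx.le (sq_nonneg (y - w)), mul_nonneg hy.le (sq_nonneg (x - w)),
        mul_nonneg hw.le (sq_nonneg (x - y)), mul_nonneg hx.le (sq_nonneg (x - w)),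
        mul_nonneg hx.le (sq_nonneg (x - y)), mul_nonneg hy.le (sq_nonneg (x - y)),
        mul_nonneg hy.le (sq_nonneg (y - w)), mul_nonneg hw.le (sq_nonneg (x - w)),
        mul_nonneg hw.le (sq_nonneg (y - w))]
    have h1 := amgm (u * k / R) (z * k) (u * z) (by positivity) (by positivity) (by positivity)
    have h2 : (u * k / R + z * k + u * z) ^ 3 ≤ S ^ 3 :=
      pow_le_pow_left₀ (by positivity) hc 3
    have h4 : (u * k * z) ^ 2 = R * (u * k / R * (z * k) * (u * z)) := by
      field_simp
    have h5 : (S * a / 3) ^ 2 = R * (S ^ 3 / 27) := by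
      have : (S * a / 3) ^ 2 = S ^ 2 * (a * a) / 9 := by ring
      rw [this, ha2]
      ring
    refine (pow_le_pow_iff_left₀ (by positivity) (by positivity) two_ne_zero).1 ?_
    rw [h4, h5]
    exact mul_le_mul_of_nonneg_left (by linarith) hR.le
end

section
/- Let R > 0, S > 0 and let u₁, k₁, z₁, u₂, k₂, z₂ be positive real numbers. Set Σ = z₁k₁ + z₂k₂ + u₁z₁ + u₂z₂, and assume u₁k₁ ≤ R·(S − Σ) and u₂k₂ ≤ R·(S − Σ). Then u₁k₁z₁ + u₂k₂z₂ ≤ S·√(R·S)/(3·√3). -/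
theorem le_of_sq_le_sq_aux {a b : ℝ} (hb : 0 ≤ b) (h : a ^ 2 ≤ b ^ 2) : a ≤ b :=
  abs_le_of_sq_le_sq' h hb |>.2

/-- Overlapped-input case of Lemma 2: with `Σ = z₁k₁ + z₂k₂ + u₁z₁ + u₂z₂` and
`uᵢkᵢ ≤ R(S − Σ)`, the number of produced terms satisfies
`u₁k₁z₁ + u₂k₂z₂ ≤ S√(RS)/(3√3)`. -/
theorem overlapped_term_bound (R S u₁ k₁ z₁ u₂ k₂ z₂ : ℝ)
    (hR : 0 < R) (hS : 0 < S)
    (hu₁ : 0 < u₁) (hk₁ : 0 < k₁) (hz₁ : 0 < z₁)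
    (hu₂ : 0 < u₂) (hk₂ : 0 < k₂) (hz₂ : 0 < z₂)
    (h₁ : u₁ * k₁ ≤ R * (S - (z₁ * k₁ + z₂ * k₂ + u₁ * z₁ + u₂ * z₂)))
    (h₂ : u₂ * k₂ ≤ R * (S - (z₁ * k₁ + z₂ * k₂ + u₁ * z₁ + u₂ * z₂))) :
    u₁ * k₁ * z₁ + u₂ * k₂ * z₂ ≤ S * Real.sqrt (R * S) / (3 * Real.sqrt 3) := by
  have key : ∀ u k m : ℝ, 0 < u → 0 < k → 0 ≤ m → u * k ≤ m ^ 2 →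
      2 * (u * k) ≤ (u + k) * m := by
    intro u k m hu hk hm h
    have huk : 0 < u * k := mul_pos hu hk
    apply le_of_sq_le_sq_aux (by positivity)
    have e1 : (u * k) * (u * k) ≤ (u * k) * m ^ 2 := mul_le_mul_of_nonneg_left h huk.le
    have e2 : 0 ≤ (u - k) ^ 2 * m ^ 2 := by positivity
    nlinarith
  set T := z₁ * k₁ + z₂ * k₂ + u₁ * z₁ + u₂ * z₂ with hT
  have hTpos : 0 < T := by positivity
  have hM : 0 < R * (S - T) := lt_of_lt_of_le (mul_pos hu₁ hk₁) h₁
  have hD : 0 < S - T := pos_of_mul_pos_right hM hR.le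
  set m := Real.sqrt (R * (S - T)) with hm
  have hm0 : 0 ≤ m := Real.sqrt_nonneg _
  have hm2 : m ^ 2 = R * (S - T) := Real.sq_sqrt hM.le
  have a1 := mul_le_mul_of_nonneg_right (key u₁ k₁ m hu₁ hk₁ hm0 (hm2 ▸ h₁)) hz₁.le
  have a2 := mul_le_mul_of_nonneg_right (key u₂ k₂ m hu₂ hk₂ hm0 (hm2 ▸ h₂)) hz₂.le
  have hb : u₁ * k₁ * z₁ + u₂ * k₂ * z₂ ≤ T * m / 2 := by
    rw [hT]; linarith
  refine hb.trans ?_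
  apply le_of_sq_le_sq_aux (by positivity)
  have r : (S * Real.sqrt (R * S) / (3 * Real.sqrt 3)) ^ 2 = R * S ^ 3 / 27 := by
    rw [div_pow, mul_pow, mul_pow, Real.sq_sqrt (by positivity), Real.sq_sqrt (by norm_num)]
    ring
  have l : (T * m / 2) ^ 2 = R * (T ^ 2 * (S - T)) / 4 := by
    rw [div_pow, mul_pow, hm2]; ring
  rw [r, l]
  have c : 27 * (T ^ 2 * (S - T)) ≤ 4 * S ^ 3 := by
    have : 0 ≤ (2 * S - 3 * T) ^ 2 * (S + 3 * T) := by positivity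
    nlinarith
  have := mul_le_mul_of_nonneg_left c hR.le
  linarith
end
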